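/- Let D be a finite nonempty index set, c : D × D → ℝ a similarity function, s : D → ℝ a family of nonnegative scores, and λ ∈ [0,1]. Define RS(S) = λ ∑_{i∈D} max_{j∈S} c(i,j) + (1−λ) ∑_{j∈S} s_j for nonempty S ⊆ D. Then RS is monotone increasing on nonempty subsets (nonempty S ⊆ T implies RS(S) ≤ RS(T)) and submodular on nonempty subsets (for nonempty S ⊆ T and x ∉ T, RS(T ∪ {x}) − RS(T) ≤ RS(S ∪ {x}) − RS(S)). -/

import Mathlib

/-- Lemma 1 in the paper's proof of its Theorem 3: the combined coreset
objective `RS(S) = λ ∑_{i∈D} max_{j∈S} c(i,j) + (1−λ) ∑_{j∈S} s_j`, with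
`s ≥ 0` and `λ ∈ [0,1]`, is monotone increasing and submodular on nonempty
subsets. -/
theorem RS_monotone_and_submodular {D : Type*} [Fintype D] [Nonempty D]
    [DecidableEq D] (c : D → D → ℝ) (s : D → ℝ) (hs : ∀ j, 0 ≤ s j)
    (lam : ℝ) (hlam0 : 0 ≤ lam) (hlam1 : lam ≤ 1) :
    (∀ (S T : Finset D) (hS : S.Nonempty) (hT : T.Nonempty), S ⊆ T →
      lam * (∑ i : D, S.sup' hS (fun j => c i j)) + (1 - lam) * (∑ j ∈ S, s j) ≤
        lam * (∑ i : D, T.sup' hT (fun j => c i j)) + (1 - lam) * (∑ j ∈ T, s j)) ∧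
    (∀ (S T : Finset D) (hS : S.Nonempty) (hST : S ⊆ T), ∀ x ∉ T,
      (lam * (∑ i : D, (insert x T).sup' (Finset.insert_nonempty x T) (fun j => c i j)) +
          (1 - lam) * (∑ j ∈ insert x T, s j)) -
        (lam * (∑ i : D, T.sup' (hS.mono hST) (fun j => c i j)) +
          (1 - lam) * (∑ j ∈ T, s j)) ≤
      (lam * (∑ i : D, (insert x S).sup' (Finset.insert_nonempty x S) (fun j => c i j)) +
          (1 - lam) * (∑ j ∈ insert x S, s j)) -
        (lam * (∑ i : D, S.sup' hS (fun j => c i j)) +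
          (1 - lam) * (∑ j ∈ S, s j))) := by
  have h1 : 0 ≤ 1 - lam := by linarith
  constructor
  · intro S T hS hT hST
    apply add_le_add
    · apply mul_le_mul_of_nonneg_left _ hlam0
      exact Finset.sum_le_sum fun i _ => Finset.sup'_mono _ hST hS
    · apply mul_le_mul_of_nonneg_left _ h1
      exact Finset.sum_le_sum_of_subset_of_nonneg hST fun j _ _ => hs j
  · intro S T hS hST x hx
    have hxS : x ∉ S := fun h => hx (hST h)
    rw [Finset.sum_insert hx, Finset.sum_insert hxS]
    have key : (∑ i : D, (insert x T).sup' (Finset.insert_nonempty x T) (fun j => c i j)) -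
        (∑ i : D, T.sup' (hS.mono hST) (fun j => c i j)) ≤
        (∑ i : D, (insert x S).sup' (Finset.insert_nonempty x S) (fun j => c i j)) -
        (∑ i : D, S.sup' hS (fun j => c i j)) := by
      rw [← Finset.sum_sub_distrib, ← Finset.sum_sub_distrib]
      refine Finset.sum_le_sum fun i _ => ?_
      rw [Finset.sup'_insert (H := hS.mono hST), Finset.sup'_insert (H := hS)]
      have hm : S.sup' hS (fun j => c i j) ≤ T.sup' (hS.mono hST) (fun j => c i j) :=
        Finset.sup'_mono _ hST hS
      generalize S.sup' hS (fun j => c i j) = a at *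
      generalize T.sup' (hS.mono hST) (fun j => c i j) = b at *
      rcases le_total (c i x) a with h | h <;> rcases le_total (c i x) b with h' | h' <;>
        simp only [sup_of_le_left, sup_of_le_right, h, h'] <;> linarith
    have := mul_le_mul_of_nonneg_left key hlam0
    linarith
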